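/- Let 0 < ε < 1/2, let f : {0,1}^n → {0,1} be (r, γ)-robust with r ≥ 1 and n ≥ 64r, and let T be an ε-noisy boolean decision tree on n variables of depth at most (n/2) · log₂(n/(64r)) / log₂(1/ε). Then, for x uniform on {0,1}^n and over the internal noise of T, Pr[ T(x) = f(x) ] ≤ 1/2 + 1/8 + γ. -/

import Mathlib

/-- A boolean decision tree on `n` variables with leaves labeled by `L`:
internal nodes are labeled by a variable index and have two children
(child `0` and child `1`). -/
inductive NoisyTree (n : ℕ) (L : Type) : Type where
  | leaf : L → NoisyTree n L
  | node : Fin n → NoisyTree n L → NoisyTree n L → NoisyTree n L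

namespace NoisyTree

/-- Depth of a tree: maximum length of a root-to-leaf path. -/
def depth {n : ℕ} {L : Type} : NoisyTree n L → ℕ
  | .leaf _ => 0
  | .node _ t0 t1 => max (depth t0) (depth t1) + 1

/-- The leaf(-label) distribution of the `ε`-noisy computation of the tree on
input `x`: at a node labeled `i`, move to the child indexed by `x i ⊕ η` where
`η` is a fresh independent Bernoulli(`ε`) bit.  `leafDist ε t x l` is the
probability that the noisy computation reaches a leaf labeled `l`. -/
def leafDist {n : ℕ} {L : Type} [DecidableEq L] (ε : ℝ) :
    NoisyTree n L → (Fin n → Bool) → L → ℝ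
  | .leaf l, _, l' => if l' = l then 1 else 0
  | .node i t0 t1, x, l' =>
      (if x i then ε else 1 - ε) * leafDist ε t0 x l' +
      (if x i then 1 - ε else ε) * leafDist ε t1 x l'

end NoisyTree

/-- A deterministic boolean decision tree on `n` variables with leaves labeled
by `L`: at a node labeled `i` the true value of `x i` is read and the
computation branches on it. -/
inductive DetTree (n : ℕ) (L : Type) : Type where
  | leaf : L → DetTree n L
  | node : Fin n → DetTree n L → DetTree n L → DetTree n L

namespace DetTree

/-- The leaf label reached by the deterministic computation on input `x`. -/
def eval {n : ℕ} {L : Type} : DetTree n L → (Fin n → Bool) → L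
  | .leaf l, _ => l
  | .node i t0 t1, x => if x i then eval t1 x else eval t0 x

/-- The set of distinct variables queried by the deterministic computation on
input `x`. -/
def queried {n : ℕ} {L : Type} : DetTree n L → (Fin n → Bool) → Finset (Fin n)
  | .leaf _, _ => ∅
  | .node i t0 t1, x => insert i (if x i then queried t1 x else queried t0 x)

end DetTree

/-- `f : {0,1}^n → {0,1}` is `(r, γ)`-robust: on every subcube of dimension `r`
(given by a set `F` of `r` free coordinates and fixed values `a` outside `F`),
the fraction of points where `f = 1` lies in `[1/2 - γ, 1/2 + γ]`. -/
def Robust (n r : ℕ) (γ : ℝ) (f : (Fin n → Bool) → Bool) : Prop :=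
  ∀ F : Finset (Fin n), F.card = r → ∀ a : Fin n → Bool,
    1 / 2 - γ ≤
      ((Finset.univ.filter fun x : Fin n → Bool =>
          (∀ j ∉ F, x j = a j) ∧ f x = true).card : ℝ) / 2 ^ r ∧
    ((Finset.univ.filter fun x : Fin n → Bool =>
          (∀ j ∉ F, x j = a j) ∧ f x = true).card : ℝ) / 2 ^ r ≤ 1 / 2 + γ

/-!
For a fixed leaf of the tree, the probability of reaching it is a product `∏ i, w i (x i)` in the
input `x`. Every noisy reading of `x i` multiplies `w i` by a factor in `[ε, 1]`, so after `c i`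
readings `w i` still dominates `δ i = ε ^ c i` times the uniform weight of the same mass. The
posterior of `x` given the leaf can hence be sampled by resampling each coordinate `i` uniformly
with probability `δ i`, independently. Once at least `r` coordinates are resampled, robustness makes
`f x` nearly balanced; fewer are resampled with probability at most `2 ^ r * exp (-(∑ i, δ i) / 2)`.
Since `∏ i, δ i ≥ ε ^ depth`, the AM-GM inequality gives `∑ i, δ i ≥ n * ε ^ (depth / n)`, and the
depth bound makes this at least `8 * r`.
-/

open Finset
open scoped BigOperators

section Subcube

variable {ι α : Type*} [Fintype ι] [DecidableEq ι] [Fintype α] [DecidableEq α]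

/-- The subcube of `ι → α` through `a` whose set of free coordinates is `F`. -/
def subcube (F : Finset ι) (a : ι → α) : Finset (ι → α) :=
  {x | ∀ j ∉ F, x j = a j}

lemma mem_subcube {F : Finset ι} {a x : ι → α} : x ∈ subcube F a ↔ ∀ j ∉ F, x j = a j := by
  simp [subcube]

lemma mem_subcube_comm {F : Finset ι} {a x : ι → α} : x ∈ subcube F a ↔ a ∈ subcube F x := by
  simp only [mem_subcube, eq_comm]

lemma card_subcube (F : Finset ι) (a : ι → α) : #(subcube F a) = Fintype.card α ^ #F := by
  have hpi : subcube F a = Fintype.piFinset fun j ↦ if j ∈ F then univ else {a j} := by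
    ext x
    simp only [mem_subcube, Fintype.mem_piFinset]
    exact forall_congr' fun j ↦ by by_cases hj : j ∈ F <;> simp [hj]
  simp [hpi, Fintype.card_piFinset, apply_ite card]

end Subcube

namespace Robust

variable {n r : ℕ} {γ : ℝ} {f : (Fin n → Bool) → Bool}

lemma nonneg (hf : Robust n r γ f) (hrn : r ≤ n) : 0 ≤ γ := by
  obtain ⟨F, -, hF⟩ := exists_subset_card_eq (s := (univ : Finset (Fin n))) (by simpa using hrn)
  have := hf F hF fun _ ↦ false
  linarith [this.1, this.2]

lemma card_filter_subcube_div_bounds (hf : Robust n r γ f) {F : Finset (Fin n)} (hF : #F = r)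
    (a : Fin n → Bool) :
    1 / 2 - γ ≤ (#{x ∈ subcube F a | f x = true} : ℝ) / 2 ^ r ∧
      (#{x ∈ subcube F a | f x = true} : ℝ) / 2 ^ r ≤ 1 / 2 + γ := by
  simp only [subcube, filter_filter]
  convert hf F hF a

lemma card_filter_subcube_le (hf : Robust n r γ f) {F : Finset (Fin n)} (hF : #F = r)
    (a : Fin n → Bool) (l : Bool) :
    (#{x ∈ subcube F a | f x = l} : ℝ) ≤ (1 / 2 + γ) * 2 ^ r := by
  obtain ⟨hlower, hupper⟩ := hf.card_filter_subcube_div_bounds hF a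
  rw [le_div_iff₀ (by positivity)] at hlower
  rw [div_le_iff₀ (by positivity)] at hupper
  cases l with
  | true => exact hupper
  | false =>
    have hsplit : (#{x ∈ subcube F a | f x = true} : ℝ) + #{x ∈ subcube F a | f x = false}
        = 2 ^ r := by
      have := card_filter_add_card_filter_not (s := subcube F a) (f · = true)
      simp only [Bool.not_eq_true, card_subcube, hF, Fintype.card_bool] at this
      exact_mod_cast this
    linarith

lemma sum_filter_le (hf : Robust n r γ f) {F : Finset (Fin n)} (hF : #F = r)
    {g : (Fin n → Bool) → ℝ} (hg : 0 ≤ g) (hgF : DependsOn g (↑Fᶜ : Set (Fin n))) (l : Bool) :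
    ∑ x with f x = l, g x ≤ (1 / 2 + γ) * ∑ x, g x := by
  have hconst (x) : ∀ a ∈ subcube F x, g a = g x := fun a ha ↦
    hgF fun j hj ↦ mem_subcube.1 ha j (by simpa using hj)
  refine le_of_mul_le_mul_left ?_ (by positivity : (0 : ℝ) < 2 ^ r)
  calc 2 ^ r * ∑ x with f x = l, g x
      = ∑ x with f x = l, ∑ a ∈ subcube F x, g a := by
        simp [mul_sum, sum_congr rfl (hconst _), card_subcube, hF]
    _ = ∑ a, ∑ x ∈ subcube F a with f x = l, g a :=
        sum_comm' fun x a ↦ by simp [mem_subcube_comm (x := x), and_comm]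
    _ = ∑ a, #{x ∈ subcube F a | f x = l} * g a := by simp
    _ ≤ ∑ a, (1 / 2 + γ) * 2 ^ r * g a := by
        gcongr with a
        · exact hg a
        · exact hf.card_filter_subcube_le hF a l
    _ = 2 ^ r * ((1 / 2 + γ) * ∑ a, g a) := by rw [← mul_sum]; ring

end Robust

/-- Doeblin's minorization condition: the nonnegative weight `w` dominates `δ` times the uniform
weight of the same total mass, so that sampling from `w` amounts to drawing a uniform point with
probability `δ` and drawing from the rest of `w` otherwise. -/
structure IsDoeblin {α : Type*} [Fintype α] (δ : ℝ) (w : α → ℝ) : Prop where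
  nonneg : 0 ≤ δ
  le_one : δ ≤ 1
  weight_nonneg : 0 ≤ w
  minorizes : ∀ a, δ * 𝔼 b, w b ≤ w a

namespace IsDoeblin

variable {α : Type*} [Fintype α] {δ ε : ℝ} {w v : α → ℝ}

lemma one_one : IsDoeblin 1 (1 : α → ℝ) where
  nonneg := zero_le_one
  le_one := le_rfl
  weight_nonneg := zero_le_one
  minorizes a := by
    have : Nonempty α := ⟨a⟩
    simp

lemma mul (hw : IsDoeblin δ w) (hε₀ : 0 ≤ ε) (hε₁ : ε ≤ 1) (hv : ∀ a, ε ≤ v a) (hv₁ : v ≤ 1) :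
    IsDoeblin (ε * δ) (v * w) where
  nonneg := mul_nonneg hε₀ hw.nonneg
  le_one := mul_le_one₀ hε₁ hw.nonneg hw.le_one
  weight_nonneg := mul_nonneg (fun a ↦ hε₀.trans (hv a)) hw.weight_nonneg
  minorizes a := calc
    ε * δ * 𝔼 b, v b * w b ≤ ε * δ * 𝔼 b, w b := by
      have := mul_nonneg hε₀ hw.nonneg
      gcongr with b
      exact mul_le_of_le_one_left (hw.weight_nonneg b) (hv₁ b)
    _ = ε * (δ * 𝔼 b, w b) := mul_assoc ..
    _ ≤ ε * w a := by
      gcongr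
      exact hw.minorizes a
    _ ≤ v a * w a := by
      gcongr
      · exact hw.weight_nonneg a
      · exact hv a

end IsDoeblin

/-- Chernoff's lower-tail bound for the size of a random set `A` which contains each `i`
independently with probability `δ i`. -/
lemma pow_mul_sum_card_lt_le {ι : Type*} [Fintype ι] [DecidableEq ι] {δ : ι → ℝ} {y : ℝ}
    (hδ₀ : 0 ≤ δ) (hδ₁ : δ ≤ 1) (hy₀ : 0 ≤ y) (hy₁ : y ≤ 1) (r : ℕ) :
    y ^ r * ∑ A : Finset ι with #A < r, (∏ i ∈ A, δ i) * ∏ i ∈ Aᶜ, (1 - δ i)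
      ≤ Real.exp (-((1 - y) * ∑ i, δ i)) := by
  have hprob (A : Finset ι) : 0 ≤ (∏ i ∈ A, δ i) * ∏ i ∈ Aᶜ, (1 - δ i) :=
    mul_nonneg (prod_nonneg fun i _ ↦ hδ₀ i) (prod_nonneg fun i _ ↦ sub_nonneg.2 (hδ₁ i))
  calc y ^ r * ∑ A : Finset ι with #A < r, (∏ i ∈ A, δ i) * ∏ i ∈ Aᶜ, (1 - δ i)
      ≤ ∑ A : Finset ι with #A < r, y ^ #A * ((∏ i ∈ A, δ i) * ∏ i ∈ Aᶜ, (1 - δ i)) := by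
        rw [mul_sum]
        refine sum_le_sum fun A hA ↦ mul_le_mul_of_nonneg_right ?_ (hprob A)
        exact pow_le_pow_of_le_one hy₀ hy₁ (mem_filter.1 hA).2.le
    _ ≤ ∑ A : Finset ι, y ^ #A * ((∏ i ∈ A, δ i) * ∏ i ∈ Aᶜ, (1 - δ i)) :=
        sum_le_sum_of_subset_of_nonneg (filter_subset _ _)
          fun A _ _ ↦ mul_nonneg (pow_nonneg hy₀ _) (hprob A)
    _ = ∏ i, (y * δ i + (1 - δ i)) := by
        simp [Fintype.prod_add, prod_mul_distrib, mul_assoc]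
    _ ≤ ∏ i, Real.exp (-((1 - y) * δ i)) := by
        refine prod_le_prod (fun i _ ↦ ?_) fun i _ ↦ ?_
        · exact add_nonneg (mul_nonneg hy₀ (hδ₀ i)) (sub_nonneg.2 (hδ₁ i))
        · linarith [Real.add_one_le_exp (-((1 - y) * δ i))]
    _ = Real.exp (-((1 - y) * ∑ i, δ i)) := by
        rw [← Real.exp_sum, sum_neg_distrib, mul_sum]

section Refresh

variable {ι α : Type*} [Fintype ι] [DecidableEq ι] [Fintype α] {δ : ι → ℝ} {w : ι → α → ℝ}

/-- The part of the product weight `x ↦ ∏ i, w i (x i)` in which exactly the coordinates of `A`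
are resampled uniformly, the `i`-th coordinate being resampled with probability `δ i`. -/
noncomputable def refreshedOn (δ : ι → ℝ) (w : ι → α → ℝ) (A : Finset ι) (x : ι → α) : ℝ :=
  (∏ i ∈ A, δ i * 𝔼 b, w i b) * ∏ i ∈ Aᶜ, (w i (x i) - δ i * 𝔼 b, w i b)

lemma sum_refreshedOn (δ : ι → ℝ) (w : ι → α → ℝ) (x : ι → α) :
    ∑ A, refreshedOn δ w A x = ∏ i, w i (x i) := by
  simp [refreshedOn, ← Fintype.prod_add]

lemma sum_sum_refreshedOn (δ : ι → ℝ) (w : ι → α → ℝ) :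
    ∑ A, ∑ x, refreshedOn δ w A x = ∑ x : ι → α, ∏ i, w i (x i) := by
  rw [sum_comm]
  exact sum_congr rfl fun x _ ↦ sum_refreshedOn δ w x

lemma refreshedOn_nonneg (hw : ∀ i, IsDoeblin (δ i) (w i)) (A : Finset ι) :
    0 ≤ refreshedOn δ w A := fun _ ↦
  mul_nonneg
    (prod_nonneg fun i _ ↦
      mul_nonneg (hw i).nonneg (expect_nonneg fun b _ ↦ (hw i).weight_nonneg b))
    (prod_nonneg fun i _ ↦ sub_nonneg.2 ((hw i).minorizes _))

lemma dependsOn_refreshedOn (δ : ι → ℝ) (w : ι → α → ℝ) (A : Finset ι) :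
    DependsOn (refreshedOn δ w A) (↑Aᶜ : Set ι) := fun x y hxy ↦ by
  unfold refreshedOn
  congr 1
  exact prod_congr rfl fun i hi ↦ by rw [hxy i (mem_coe.2 hi)]

lemma sum_refreshedOn_apply (δ : ι → ℝ) (w : ι → α → ℝ) (A : Finset ι) :
    ∑ x, refreshedOn δ w A x
      = ((∏ i ∈ A, δ i) * ∏ i ∈ Aᶜ, (1 - δ i)) * ∑ x : ι → α, ∏ i, w i (x i) := by
  have hsplit (u v : ι → ℝ) : (∏ i ∈ A, u i) * ∏ i ∈ Aᶜ, v i = ∏ i, if i ∈ A then u i else v i := by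
    simp [prod_ite, filter_notMem_eq_sdiff, compl_eq_univ_sdiff]
  have hmass (i : ι) : ∑ b, (if i ∈ A then δ i * 𝔼 b, w i b else w i b - δ i * 𝔼 b, w i b)
      = (if i ∈ A then δ i else 1 - δ i) * ∑ b, w i b := by
    split_ifs
    · rw [sum_const, card_univ, nsmul_eq_mul, ← Fintype.card_mul_expect (w i)]
      ring
    · rw [sum_sub_distrib, sum_const, card_univ, nsmul_eq_mul, ← Fintype.card_mul_expect (w i)]
      ring
  calc ∑ x, refreshedOn δ w A x
      = ∑ x : ι → α, ∏ i, if i ∈ A then δ i * 𝔼 b, w i b else w i (x i) - δ i * 𝔼 b, w i b := by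
        simp only [refreshedOn, hsplit]
    _ = ∏ i, (if i ∈ A then δ i else 1 - δ i) * ∑ b, w i b := by
        simp only [← hmass, Fintype.prod_sum]
    _ = _ := by rw [prod_mul_distrib, hsplit, Fintype.prod_sum]

lemma sum_card_lt_sum_refreshedOn_le (hw : ∀ i, IsDoeblin (δ i) (w i)) (r : ℕ) :
    ∑ A with #A < r, ∑ x, refreshedOn δ w A x
      ≤ 2 ^ r * Real.exp (-((∑ i, δ i) / 2)) * ∑ x : ι → α, ∏ i, w i (x i) := by
  have htail := pow_mul_sum_card_lt_le (y := 1 / 2) (fun i ↦ (hw i).nonneg)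
    (fun i ↦ (hw i).le_one) (by norm_num) (by norm_num) r
  rw [one_div, inv_pow, inv_mul_le_iff₀ (by positivity)] at htail
  simp only [sum_refreshedOn_apply, ← sum_mul]
  gcongr
  · exact sum_nonneg fun x _ ↦ prod_nonneg fun i _ ↦ (hw i).weight_nonneg _
  · convert htail using 3
    ring

end Refresh

namespace Robust

variable {n r : ℕ} {γ : ℝ} {f : (Fin n → Bool) → Bool} {δ : Fin n → ℝ} {w : Fin n → Bool → ℝ}

lemma sum_filter_refreshedOn_le (hf : Robust n r γ f) (hw : ∀ i, IsDoeblin (δ i) (w i))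
    {A : Finset (Fin n)} (hA : r ≤ #A) (l : Bool) :
    ∑ x with f x = l, refreshedOn δ w A x ≤ (1 / 2 + γ) * ∑ x, refreshedOn δ w A x := by
  obtain ⟨F, hFA, hF⟩ := exists_subset_card_eq hA
  refine hf.sum_filter_le hF (refreshedOn_nonneg hw A) ?_ l
  exact (dependsOn_refreshedOn δ w A).mono (by simpa using hFA)

lemma sum_prod_le (hf : Robust n r γ f) (hrn : r ≤ n) (hw : ∀ i, IsDoeblin (δ i) (w i))
    (l : Bool) :
    ∑ x with f x = l, ∏ i, w i (x i)
      ≤ (1 / 2 + γ + 2 ^ r * Real.exp (-((∑ i, δ i) / 2)))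
        * ∑ x : Fin n → Bool, ∏ i, w i (x i) := by
  set M := ∑ x : Fin n → Bool, ∏ i, w i (x i)
  have htotal : ∑ A, ∑ x, refreshedOn δ w A x = M := sum_sum_refreshedOn δ w
  have hγ := hf.nonneg hrn
  have hnonneg (A x) : 0 ≤ refreshedOn δ w A x := refreshedOn_nonneg hw A x
  have hpart (A) : ∑ x with f x = l, refreshedOn δ w A x
      ≤ (1 / 2 + γ) * ∑ x, refreshedOn δ w A x
        + if #A < r then ∑ x, refreshedOn δ w A x else 0 := by
    split_ifs with hA
    · have htriv : ∑ x with f x = l, refreshedOn δ w A x ≤ ∑ x, refreshedOn δ w A x :=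
        sum_le_sum_of_subset_of_nonneg (filter_subset _ _) fun x _ _ ↦ hnonneg A x
      refine htriv.trans (le_add_of_nonneg_left (mul_nonneg (by linarith) ?_))
      exact sum_nonneg fun x _ ↦ hnonneg A x
    · rw [add_zero]
      exact hf.sum_filter_refreshedOn_le hw (not_lt.1 hA) l
  calc ∑ x with f x = l, ∏ i, w i (x i)
      = ∑ A, ∑ x with f x = l, refreshedOn δ w A x := by
        rw [sum_comm]
        exact sum_congr rfl fun x _ ↦ (sum_refreshedOn δ w x).symm
    _ ≤ (1 / 2 + γ) * M + ∑ A with #A < r, ∑ x, refreshedOn δ w A x := by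
        rw [← htotal, mul_sum, sum_filter, ← sum_add_distrib]
        exact sum_le_sum fun A _ ↦ hpart A
    _ ≤ (1 / 2 + γ) * M + 2 ^ r * Real.exp (-((∑ i, δ i) / 2)) * M := by
        gcongr
        exact sum_card_lt_sum_refreshedOn_le hw r
    _ = _ := by ring

end Robust

lemma card_mul_prod_rpow_inv_card_le_sum {ι : Type*} [Fintype ι] {z : ι → ℝ} (hz : 0 ≤ z) :
    Fintype.card ι * (∏ i, z i) ^ ((Fintype.card ι : ℝ)⁻¹) ≤ ∑ i, z i := by
  cases isEmpty_or_nonempty ι with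
  | inl => simp
  | inr =>
    have := Real.geom_mean_le_arith_mean univ 1 z (by simp)
      (by simp [Fintype.card_pos]) fun i _ ↦ hz i
    rw [← le_div_iff₀' (mod_cast Fintype.card_pos)]
    simpa using this

lemma prod_update_mul {ι M : Type*} [Fintype ι] [DecidableEq ι] [CommMonoid M] (u : ι → M) (i : ι)
    (a : M) : ∏ j, Function.update u i (a * u i) j = a * ∏ j, u j := by
  rw [prod_update_of_mem (mem_univ i), mul_assoc, ← prod_eq_mul_prod_sdiff_singleton_of_mem]
  exact mem_univ i

lemma prod_update_mul_apply {ι α M : Type*} [Fintype ι] [DecidableEq ι] [CommMonoid M]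
    (w : ι → α → M) (i : ι) (v : α → M) (x : ι → α) :
    ∏ j, Function.update w i (v * w i) j (x j) = v (x i) * ∏ j, w j (x j) := by
  simp only [Function.apply_update (fun j (u : α → M) ↦ u (x j)), Pi.mul_apply]
  exact prod_update_mul (fun j ↦ w j (x j)) i (v (x i))

/-- The probability that the `ε`-noisy reading of the bit `b` returns `a`. -/
def noisyBit (ε : ℝ) (a b : Bool) : ℝ :=
  if a = b then 1 - ε else ε

lemma noisyBit_false_add_true (ε : ℝ) (b : Bool) :
    noisyBit ε false b + noisyBit ε true b = 1 := by
  cases b <;> simp [noisyBit]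

lemma IsDoeblin.noisyBit_mul {δ ε : ℝ} {w : Bool → ℝ} (hw : IsDoeblin δ w) (hε₀ : 0 ≤ ε)
    (hε : ε ≤ 1 / 2) (a : Bool) : IsDoeblin (ε * δ) (noisyBit ε a * w) := by
  refine hw.mul hε₀ (by linarith) (fun b ↦ ?_) fun b ↦ ?_ <;>
  · dsimp only [noisyBit, Pi.one_apply]
    split_ifs <;> linarith

namespace NoisyTree

variable {n : ℕ} {ε : ℝ}

lemma leafDist_node {L : Type} [DecidableEq L] (i : Fin n) (t₀ t₁ : NoisyTree n L)
    (x : Fin n → Bool) (l : L) :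
    leafDist ε (node i t₀ t₁) x l
      = noisyBit ε false (x i) * leafDist ε t₀ x l + noisyBit ε true (x i) * leafDist ε t₁ x l := by
  cases h : x i <;> simp [leafDist, noisyBit, h]

lemma sum_prod_mul_leafDist_le {L : Type} [DecidableEq L] {p B : ℝ} (hε₀ : 0 ≤ ε)
    (hε : ε ≤ 1 / 2) {g : (Fin n → Bool) → L}
    (hleaf : ∀ (w : Fin n → Bool → ℝ) (δ : Fin n → ℝ), (∀ i, IsDoeblin (δ i) (w i)) →
      p ≤ ∏ i, δ i → ∀ l,
        ∑ x with g x = l, ∏ i, w i (x i) ≤ B * ∑ x : Fin n → Bool, ∏ i, w i (x i))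
    (T : NoisyTree n L) {w : Fin n → Bool → ℝ} {δ : Fin n → ℝ}
    (hw : ∀ i, IsDoeblin (δ i) (w i)) (hp : p ≤ ε ^ T.depth * ∏ i, δ i) :
    ∑ x, (∏ i, w i (x i)) * T.leafDist ε x (g x) ≤ B * ∑ x : Fin n → Bool, ∏ i, w i (x i) := by
  induction T generalizing w δ with
  | leaf l =>
    simpa [leafDist, ← sum_filter] using hleaf w δ hw (by simpa [depth] using hp) l
  | node i t₀ t₁ ih₀ ih₁ =>
    let w' (a : Bool) := Function.update w i (noisyBit ε a * w i)
    let δ' := Function.update δ i (ε * δ i)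
    have hw' (a j) : IsDoeblin (δ' j) (w' a j) := by
      rcases eq_or_ne j i with rfl | hj
      · simpa [w', δ'] using (hw j).noisyBit_mul hε₀ hε a
      · simpa [w', δ', hj] using hw j
    have hprod_w' (a) (x : Fin n → Bool) :
        ∏ j, w' a j (x j) = noisyBit ε a (x i) * ∏ j, w j (x j) :=
      prod_update_mul_apply w i (noisyBit ε a) x
    have hprod_δ' : ∏ j, δ' j = ε * ∏ j, δ j := prod_update_mul δ i ε
    have hp' {d : ℕ} (hd : d ≤ max t₀.depth t₁.depth) : p ≤ ε ^ d * ∏ j, δ' j := by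
      have hδ : 0 ≤ ∏ j, δ j := prod_nonneg fun j _ ↦ (hw j).nonneg
      calc p ≤ ε ^ (max t₀.depth t₁.depth + 1) * ∏ j, δ j := hp
        _ ≤ ε ^ (d + 1) * ∏ j, δ j := by
          gcongr ?_ * _
          exact pow_le_pow_of_le_one hε₀ (by linarith) (by omega)
        _ = ε ^ d * ∏ j, δ' j := by rw [hprod_δ']; ring
    calc ∑ x, (∏ j, w j (x j)) * leafDist ε (node i t₀ t₁) x (g x)
        = ∑ x, (∏ j, w' false j (x j)) * leafDist ε t₀ x (g x)
          + ∑ x, (∏ j, w' true j (x j)) * leafDist ε t₁ x (g x) := by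
          simp only [leafDist_node, hprod_w', ← sum_add_distrib]
          exact sum_congr rfl fun x _ ↦ by ring
      _ ≤ B * ∑ x : Fin n → Bool, ∏ j, w' false j (x j)
          + B * ∑ x : Fin n → Bool, ∏ j, w' true j (x j) :=
          add_le_add (ih₀ (hw' false) (hp' (le_max_left ..)))
            (ih₁ (hw' true) (hp' (le_max_right ..)))
      _ = B * ∑ x : Fin n → Bool, ∏ j, w j (x j) := by
          simp only [hprod_w', ← mul_add, ← sum_add_distrib, ← add_mul, noisyBit_false_add_true,
            one_mul]

theorem sum_leafDist_le_of_robust {r : ℕ} {γ : ℝ} {f : (Fin n → Bool) → Bool}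
    (hf : Robust n r γ f) (hrn : r ≤ n) (hε₀ : 0 ≤ ε) (hε : ε ≤ 1 / 2) (T : NoisyTree n Bool) :
    (1 / 2 ^ n) * ∑ x, T.leafDist ε x (f x)
      ≤ 1 / 2 + γ + 2 ^ r * Real.exp (-(n * ε ^ (T.depth / n : ℝ) / 2)) := by
  have hleaf (w : Fin n → Bool → ℝ) (δ : Fin n → ℝ) (hw : ∀ i, IsDoeblin (δ i) (w i))
      (hδ : ε ^ T.depth ≤ ∏ i, δ i) (l : Bool) :
      ∑ x with f x = l, ∏ i, w i (x i)
        ≤ (1 / 2 + γ + 2 ^ r * Real.exp (-(n * ε ^ (T.depth / n : ℝ) / 2)))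
          * ∑ x : Fin n → Bool, ∏ i, w i (x i) := by
    have hsum : n * ε ^ (T.depth / n : ℝ) ≤ ∑ i, δ i := by
      refine le_trans ?_ (card_mul_prod_rpow_inv_card_le_sum fun i ↦ (hw i).nonneg)
      rw [div_eq_mul_inv, Real.rpow_mul hε₀, Real.rpow_natCast, Fintype.card_fin]
      gcongr
    refine (hf.sum_prod_le hrn hw l).trans ?_
    gcongr
    exact sum_nonneg fun x _ ↦ prod_nonneg fun i _ ↦ (hw i).weight_nonneg _
  have := sum_prod_mul_leafDist_le hε₀ hε hleaf T (w := 1) (δ := 1) (fun _ ↦ .one_one) (by simp)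
  rw [one_div, inv_mul_le_iff₀ (by positivity), mul_comm]
  simpa using this

end NoisyTree

lemma le_mul_rpow_of_le_mul_logb {b n q ε d : ℝ} (hb : 1 < b) (hn : 0 < n) (hq : 0 < q)
    (hε₀ : 0 < ε) (hε₁ : ε < 1) (hd : d ≤ n * Real.logb b (n / q) / Real.logb b (1 / ε)) :
    q ≤ n * ε ^ (d / n) := by
  rw [le_div_iff₀ (Real.logb_pos hb (one_lt_one_div hε₀ hε₁)), ← div_le_iff₀' hn,
    mul_div_right_comm, ← Real.logb_rpow_eq_mul_logb_of_pos (by positivity),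
    Real.logb_le_logb hb (by positivity) (by positivity), one_div, Real.inv_rpow hε₀.le,
    inv_le_iff_one_le_mul₀ (by positivity), div_mul_eq_mul_div, one_le_div hq] at hd
  exact hd

lemma half_mul_logb_div_logb_le {b n q q' ε : ℝ} (hb : 1 < b) (hq' : 0 < q') (hqq' : q' ≤ q)
    (hqn : q ≤ n) (hε₀ : 0 < ε) (hε₁ : ε ≤ 1) :
    n / 2 * Real.logb b (n / q) / Real.logb b (1 / ε)
      ≤ n * Real.logb b (n / q') / Real.logb b (1 / ε) := by
  have hq : 0 < q := hq'.trans_le hqq'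
  have hn : 0 < n := hq.trans_le hqn
  have hlog : 0 ≤ Real.logb b (n / q) := Real.logb_nonneg hb ((one_le_div hq).2 hqn)
  have hlogε : 0 ≤ Real.logb b (1 / ε) := Real.logb_nonneg hb (one_le_one_div hε₀ hε₁)
  gcongr
  exact half_le_self hn.le

lemma two_pow_mul_exp_neg_le {r : ℕ} (hr : 1 ≤ r) {s : ℝ} (hs : 4 * r ≤ s) :
    2 ^ r * Real.exp (-s) ≤ 1 / 8 := by
  have hexp : Real.exp (-4) ≤ 1 / 16 := by
    have hpow : (2 : ℝ) ^ 4 ≤ Real.exp 1 ^ 4 := by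
      gcongr
      linarith [Real.add_one_le_exp 1]
    rw [← Real.exp_nat_mul] at hpow
    rw [Real.exp_neg]
    exact inv_le_of_inv_le₀ (by norm_num) (by norm_num at hpow ⊢; exact hpow)
  calc 2 ^ r * Real.exp (-s) ≤ 2 ^ r * Real.exp (-4) ^ r := by
        rw [← Real.exp_nat_mul]
        gcongr
        linarith
    _ = (2 * Real.exp (-4)) ^ r := (mul_pow ..).symm
    _ ≤ (1 / 8) ^ r := by gcongr; linarith
    _ ≤ 1 / 8 := pow_le_of_le_one (by norm_num) (by norm_num) (by omega)

theorem noisy_tree_error_on_robust_general {n r : ℕ} {ε γ : ℝ} (hε₀ : 0 < ε) (hε : ε ≤ 1 / 2)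
    (hr : 1 ≤ r) (hn : 8 * r ≤ n) {f : (Fin n → Bool) → Bool} (hf : Robust n r γ f)
    (T : NoisyTree n Bool)
    (hdepth : (T.depth : ℝ) ≤ n * Real.logb 2 (n / (8 * r)) / Real.logb 2 (1 / ε)) :
    (1 / 2 ^ n) * ∑ x : Fin n → Bool, T.leafDist ε x (f x) ≤ 1 / 2 + 1 / 8 + γ := by
  have hmixed : 8 * (r : ℝ) ≤ n * ε ^ (T.depth / n : ℝ) :=
    le_mul_rpow_of_le_mul_logb one_lt_two (by norm_cast; omega) (by positivity) hε₀ (by linarith)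
      hdepth
  have herror := two_pow_mul_exp_neg_le (s := n * ε ^ (T.depth / n : ℝ) / 2) hr (by linarith)
  linarith [T.sum_leafDist_le_of_robust hf (by omega) hε₀.le hε]

/-- If `f` is `(r, γ)`-robust with `1 ≤ r` and `n ≥ 64r`, and `T` is an `ε`-noisy
boolean decision tree (leaves labeled by output bits) of depth at most
`(n/2) · log₂(n/(64r)) / log₂(1/ε)`, then for `x` uniform on `{0,1}^n` and over the
internal noise of `T`, `Pr[T(x) = f(x)] ≤ 1/2 + 1/8 + γ`. -/
theorem noisy_tree_error_on_robust {n r : ℕ} (ε γ : ℝ)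
    (hε0 : 0 < ε) (hε1 : ε < 1 / 2) (hr : 1 ≤ r) (hn : 64 * r ≤ n)
    (f : (Fin n → Bool) → Bool) (hf : Robust n r γ f)
    (T : NoisyTree n Bool)
    (hdepth : (T.depth : ℝ) ≤
      ((n : ℝ) / 2) * Real.logb 2 ((n : ℝ) / (64 * r)) / Real.logb 2 (1 / ε)) :
    (1 / 2 ^ n) * ∑ x : Fin n → Bool, T.leafDist ε x (f x) ≤ 1 / 2 + 1 / 8 + γ := by
  exact noisy_tree_error_on_robust_general hε0 hε1.le hr (by omega) hf T <| hdepth.trans <|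
    half_mul_logb_div_logb_le one_lt_two (by positivity) (by gcongr; norm_num) (mod_cast hn) hε0
      (by linarith)
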